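/- arXiv:1705.07484 — 2 statements merged into one kernel-verified Lean document; each statement's English description precedes it below -/
import Mathlib

section
/- Let $c$ and $\mu$ be fixed real numbers with $1 < c < 2$ and $0 < \mu < 1$. There exists a constant $C = C(c, \mu) > 0$ such that for every real $X \geq 1$ and every integer $k \geq 1$, one has $\left| \sum_{\mu X < n \leq X} e(k n^c) \right| \leq C \left( k^{\frac{1}{2}} X^{\frac{c}{2}} + k^{-\frac{1}{2}} X^{1 - \frac{c}{2}} \right)$, where the sum is over integers $n$. -/
/-!
This is van der Corput's second derivative test applied to `f(x) = k x ^ c`, in a discrete form.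

Let `d n = f (n + 1) - f n`. If `d` is non-decreasing and stays in `[δ, 1 - δ]` modulo a fixed
integer, then the Kusmin-Landau inequality (`norm_sum_le_of_diff_mem`) bounds the sum of `e (f n)`
by `1 + 1 / δ`: one writes `e (f n) = g n * (e (f (n + 1)) - e (f n))` with
`g n = 1 / (e (d n) - 1) = -1/2 - (i/2) cot (π d n)` and sums by parts; the variation of `g`
telescopes because the cotangent is monotone.

In general (`second_difference_test`) the range of summation is cut according to the integer
`m = ⌊d n + δ⌋`. For given `m`, the terms with `d n` within `δ` of `m` are counted, using that `d`
grows with slope at least `lam`, and the other ones are handled by Kusmin-Landau. If `0 ≤ d ≤ V`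
there are at most `V + 2` values of `m`.

For `f(x) = k x ^ c` and `n ≤ X`, the mean value theorem gives `0 ≤ d n ≪ k X ^ (c - 1)` and a
slope `≫ k X ^ (c - 2)`. Put `Λ = k X ^ (c - 2)`. If `Λ ≤ 1 / 4`, the choice `δ = √Λ` gives the bound
`X √Λ + 1 / √Λ` up to a constant, which is the claim; otherwise the trivial bound `X` suffices.
-/

/-- `e(t) = e^{2πit}`. -/
noncomputable def e (t : ℝ) : ℂ := Complex.exp (2 * Real.pi * Complex.I * t)

/-! ### The exponential `e` and the factor `1 / (e t - 1)` -/

lemma norm_e (t : ℝ) : ‖e t‖ = 1 := by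
  have : e t = Complex.exp ((2 * Real.pi * t : ℝ) * Complex.I) := by
    unfold e; congr 1; push_cast; ring
  rw [this, Complex.norm_exp_ofReal_mul_I]

lemma e_add (s t : ℝ) : e (s + t) = e s * e t := by
  unfold e; rw [← Complex.exp_add]; congr 1; push_cast; ring

lemma e_sub_int (t : ℝ) (m : ℤ) : e (t - m) = e t := by
  unfold e
  rw [Complex.exp_eq_exp_iff_exists_int]
  exact ⟨-m, by push_cast; ring⟩

/-- Half the cotangent of `π t`. -/
noncomputable def halfCot (t : ℝ) : ℝ := Real.cos (Real.pi * t) / (2 * Real.sin (Real.pi * t))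

/-- The number `1 / (e t - 1)`, written through its real and imaginary parts. -/
noncomputable def invESubOne (t : ℝ) : ℂ := -1 / 2 - Complex.I * (halfCot t : ℂ)

lemma e_sub_one_mul (t : ℝ) (h : Real.sin (Real.pi * t) ≠ 0) :
    (e t - 1) * invESubOne t = 1 := by
  have h1 : e t = ((Real.cos (Real.pi * t) : ℂ) + Real.sin (Real.pi * t) * Complex.I) ^ 2 := by
    have : e t = Complex.exp ((Real.pi * t : ℝ) * Complex.I) ^ 2 := by
      unfold e; rw [← Complex.exp_nat_mul]; congr 1; push_cast; ring
    rw [this, Complex.exp_mul_I, Complex.ofReal_cos, Complex.ofReal_sin]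
  have h2 : (Real.cos (Real.pi * t) : ℂ) ^ 2 + (Real.sin (Real.pi * t) : ℂ) ^ 2 = 1 := by
    have := Real.cos_sq_add_sin_sq (Real.pi * t)
    exact_mod_cast this
  have h3 : (Real.sin (Real.pi * t) : ℂ) ≠ 0 := by exact_mod_cast h
  rw [h1]
  unfold invESubOne halfCot
  push_cast only [Complex.ofReal_div, Complex.ofReal_mul, Complex.ofReal_ofNat]
  generalize (Real.cos (Real.pi * t) : ℂ) = a at *
  generalize (Real.sin (Real.pi * t) : ℂ) = s at *
  have hI := Complex.I_sq
  have h4 : (a + s * Complex.I) ^ 2 - 1 = 2 * s * Complex.I * (a + s * Complex.I) := by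
    linear_combination h2 - s ^ 2 * hI
  rw [h4]
  field_simp
  linear_combination h2 - (a ^ 2 + s ^ 2) * hI - Complex.I * a * s * hI

lemma two_mul_le_sin {δ t : ℝ} (hδ : 0 < δ) (h1 : δ ≤ t) (h2 : t ≤ 1 - δ) :
    2 * δ ≤ Real.sin (Real.pi * t) := by
  have hpi := Real.pi_pos
  rcases le_total t (1 / 2) with h | h
  · have := Real.mul_le_sin (x := Real.pi * t) (by nlinarith) (by nlinarith)
    have h3 : 2 / Real.pi * (Real.pi * t) = 2 * t := by field_simp
    linarith
  · have := Real.mul_le_sin (x := Real.pi * (1 - t)) (by nlinarith) (by nlinarith)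
    have h3 : 2 / Real.pi * (Real.pi * (1 - t)) = 2 * (1 - t) := by field_simp
    have h4 : Real.sin (Real.pi * (1 - t)) = Real.sin (Real.pi * t) := by
      rw [← Real.sin_pi_sub]; congr 1; ring
    linarith

lemma abs_halfCot_le {δ t : ℝ} (hδ : 0 < δ) (h1 : δ ≤ t) (h2 : t ≤ 1 - δ) :
    |halfCot t| ≤ 1 / (4 * δ) := by
  have hs := two_mul_le_sin hδ h1 h2
  unfold halfCot
  rw [abs_div, abs_of_pos (show 0 < 2 * Real.sin (Real.pi * t) by linarith)]
  exact div_le_div₀ zero_le_one (Real.abs_cos_le_one _) (by linarith) (by linarith)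

lemma halfCot_anti {δ s t : ℝ} (hδ : 0 < δ) (h1 : δ ≤ s) (hst : s ≤ t) (h2 : t ≤ 1 - δ) :
    halfCot t ≤ halfCot s := by
  have hs := two_mul_le_sin hδ h1 (hst.trans h2)
  have ht := two_mul_le_sin hδ (h1.trans hst) h2
  unfold halfCot
  rw [div_le_div_iff₀ (by linarith) (by linarith)]
  have h3 : 0 ≤ Real.sin (Real.pi * t - Real.pi * s) := by
    apply Real.sin_nonneg_of_nonneg_of_le_pi <;> nlinarith [Real.pi_pos]
  rw [Real.sin_sub] at h3
  linarith

lemma norm_invESubOne_le {δ t : ℝ} (hδ : 0 < δ) (h1 : δ ≤ t) (h2 : t ≤ 1 - δ) :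
    ‖invESubOne t‖ ≤ 1 / 2 + 1 / (4 * δ) := by
  unfold invESubOne
  refine (norm_sub_le _ _).trans (add_le_add (by norm_num) ?_)
  rw [norm_mul, Complex.norm_I, one_mul, Complex.norm_real]
  exact abs_halfCot_le hδ h1 h2

/-! ### The Kusmin-Landau inequality -/

/-- The Kusmin-Landau inequality, for a sum over an initial segment of `ℕ`. -/
lemma norm_sum_le_of_diff_mem (f : ℕ → ℝ) (N : ℕ) {δ : ℝ} (hδ : 0 < δ)
    (h1 : ∀ n ≤ N, δ ≤ f (n + 1) - f n) (h2 : ∀ n ≤ N, f (n + 1) - f n ≤ 1 - δ)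
    (hmono : ∀ n < N, f (n + 1) - f n ≤ f (n + 1 + 1) - f (n + 1)) :
    ‖∑ n ∈ Finset.range (N + 1), e (f n)‖ ≤ 1 + 1 / δ := by
  set d : ℕ → ℝ := fun n => f (n + 1) - f n with hd
  have hrec : ∀ n ≤ N, invESubOne (d n) * e (f (n + 1)) =
      e (f n) + invESubOne (d n) * e (f n) := by
    intro n hn
    have hs := two_mul_le_sin hδ (h1 n hn) (h2 n hn)
    have := e_sub_one_mul (d n) (by simp only [hd]; linarith)
    have h3 : e (f (n + 1)) = e (f n) * e (d n) := by rw [← e_add]; congr 1; simp [hd]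
    rw [h3]
    linear_combination e (f n) * this
  -- Summation by parts: the sum agrees with the boundary terms up to the variation of `halfCot`.
  have key : ∀ M ≤ N, ‖∑ n ∈ Finset.range (M + 1), e (f n) - invESubOne (d M) * e (f (M + 1))
      + invESubOne (d 0) * e (f 0)‖ ≤ halfCot (d 0) - halfCot (d M) := by
    intro M
    induction M with
    | zero =>
      intro h
      rw [hrec 0 h]
      simp
    | succ M ih =>
      intro h
      have hM := ih (by omega)
      have heq : ∑ n ∈ Finset.range (M + 1 + 1), e (f n)
          - invESubOne (d (M + 1)) * e (f (M + 1 + 1)) + invESubOne (d 0) * e (f 0) =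
          (∑ n ∈ Finset.range (M + 1), e (f n) - invESubOne (d M) * e (f (M + 1))
            + invESubOne (d 0) * e (f 0))
          + (invESubOne (d M) - invESubOne (d (M + 1))) * e (f (M + 1)) := by
        rw [Finset.sum_range_succ _ (M + 1), hrec (M + 1) h]; ring
      have hanti : halfCot (d (M + 1)) ≤ halfCot (d M) :=
        halfCot_anti hδ (h1 M (by omega)) (hmono M (by omega)) (h2 (M + 1) h)
      have hdiff : ‖invESubOne (d M) - invESubOne (d (M + 1))‖ =
          halfCot (d M) - halfCot (d (M + 1)) := by
        have : invESubOne (d M) - invESubOne (d (M + 1)) =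
            -Complex.I * ((halfCot (d M) - halfCot (d (M + 1)) : ℝ) : ℂ) := by
          unfold invESubOne; push_cast; ring
        rw [this, norm_mul, norm_neg, Complex.norm_I, one_mul, Complex.norm_real,
          Real.norm_of_nonneg (by linarith)]
      rw [heq]
      refine (norm_add_le _ _).trans ?_
      rw [norm_mul, norm_e, mul_one, hdiff]
      linarith
  have hN := key N le_rfl
  have hsplit : ∑ n ∈ Finset.range (N + 1), e (f n) =
      (∑ n ∈ Finset.range (N + 1), e (f n) - invESubOne (d N) * e (f (N + 1))
      + invESubOne (d 0) * e (f 0)) + invESubOne (d N) * e (f (N + 1))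
      - invESubOne (d 0) * e (f 0) := by ring
  have b0 := norm_invESubOne_le hδ (h1 0 (by omega)) (h2 0 (by omega))
  have bN := norm_invESubOne_le hδ (h1 N le_rfl) (h2 N le_rfl)
  have c0 := abs_le.1 (abs_halfCot_le hδ (h1 0 (by omega)) (h2 0 (by omega)))
  have cN := abs_le.1 (abs_halfCot_le hδ (h1 N le_rfl) (h2 N le_rfl))
  rw [hsplit]
  refine (norm_sub_le _ _).trans ?_
  refine (add_le_add_left (norm_add_le _ _) _).trans ?_
  rw [norm_mul, norm_mul, norm_e, norm_e, mul_one, mul_one]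
  have hq : 1 / δ = 4 * (1 / (4 * δ)) := by field_simp
  simp only [hd] at *
  linarith [c0.2, cN.1]

/-- The Kusmin-Landau inequality, for a sum over a set of consecutive integers on which the
differences of `f` lie between `m + δ` and `m + 1 - δ` for some integer `m`. -/
lemma norm_sum_le_of_diff_mem_int (f : ℕ → ℝ) (S : Finset ℕ)
    (hS : ∀ a ∈ S, ∀ b ∈ S, ∀ n, a ≤ n → n ≤ b → n ∈ S) {δ : ℝ} (hδ : 0 < δ) (m : ℤ)
    (h1 : ∀ n ∈ S, m + δ ≤ f (n + 1) - f n) (h2 : ∀ n ∈ S, f (n + 1) - f n ≤ m + 1 - δ)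
    (hmono : ∀ n ∈ S, n + 1 ∈ S → f (n + 1) - f n ≤ f (n + 1 + 1) - f (n + 1)) :
    ‖∑ n ∈ S, e (f n)‖ ≤ 1 + 1 / δ := by
  rcases S.eq_empty_or_nonempty with rfl | hne
  · simp; positivity
  set a := S.min' hne
  set b := S.max' hne
  have ha : a ∈ S := S.min'_mem hne
  have hb : b ∈ S := S.max'_mem hne
  have hab : a ≤ b := S.min'_le b hb
  have hSe : S = Finset.Ico a (b + 1) := by
    ext n
    rw [Finset.mem_Ico]
    exact ⟨fun h => ⟨S.min'_le n h, Nat.lt_succ_of_le (S.le_max' n h)⟩,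
      fun h => hS a ha b hb n h.1 (by omega)⟩
  have hmem : ∀ n ≤ b - a, a + n ∈ S := fun n hn => hS a ha b hb _ (by omega) (by omega)
  have hsum : ∑ n ∈ S, e (f n) =
      ∑ n ∈ Finset.range (b - a + 1), e (f (a + n) - (m * n : ℤ)) := by
    rw [hSe, Finset.sum_Ico_eq_sum_range, show b + 1 - a = b - a + 1 by omega]
    exact Finset.sum_congr rfl fun n _ => (e_sub_int _ _).symm
  rw [hsum]
  apply norm_sum_le_of_diff_mem (fun n => f (a + n) - ((m * n : ℤ) : ℝ)) (b - a) hδ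
  · intro n hn
    have := h1 _ (hmem n hn)
    push_cast
    rw [← add_assoc]; linarith
  · intro n hn
    have := h2 _ (hmem n hn)
    push_cast
    rw [← add_assoc]; linarith
  · intro n hn
    have := hmono _ (hmem n hn.le) (hmem (n + 1) (by omega))
    push_cast
    simp only [← add_assoc]; linarith

/-! ### The discrete second derivative test -/

/-- The discrete second derivative test: the differences of `f` lie in `[0, V]` and grow with
slope at least `lam`. -/
lemma second_difference_test (f : ℕ → ℝ) (S : Finset ℕ)
    (hS : ∀ a ∈ S, ∀ b ∈ S, ∀ n, a ≤ n → n ≤ b → n ∈ S) {δ lam V : ℝ} (hδ : 0 < δ)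
    (hδ2 : δ ≤ 1 / 2) (hlam : 0 < lam) (hV : 0 ≤ V)
    (h0 : ∀ n ∈ S, 0 ≤ f (n + 1) - f n) (h1 : ∀ n ∈ S, f (n + 1) - f n ≤ V)
    (hgrow : ∀ a ∈ S, ∀ b ∈ S, a ≤ b →
      lam * ((b : ℝ) - a) ≤ (f (b + 1) - f b) - (f (a + 1) - f a)) :
    ‖∑ n ∈ S, e (f n)‖ ≤ (V + 2) * (2 * δ / lam + 2 + 1 / δ) := by
  have hm : ∀ a ∈ S, ∀ b ∈ S, a ≤ b → f (a + 1) - f a ≤ f (b + 1) - f b := by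
    intro a ha b hb hab
    have h3 : (a : ℝ) ≤ b := by exact_mod_cast hab
    nlinarith [hgrow a ha b hb hab, mul_nonneg hlam.le (sub_nonneg.2 h3)]
  have hmaps : ∀ n ∈ S, ⌊f (n + 1) - f n + δ⌋ ∈ Finset.Icc (0 : ℤ) ⌊V + 1⌋ := by
    intro n hn
    rw [Finset.mem_Icc]
    exact ⟨Int.floor_nonneg.2 (by linarith [h0 n hn]), Int.floor_mono (by linarith [h1 n hn])⟩
  rw [← Finset.sum_fiberwise_of_maps_to hmaps]
  have hfib : ∀ m ∈ Finset.Icc (0 : ℤ) ⌊V + 1⌋,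
      ‖∑ n ∈ S with ⌊f (n + 1) - f n + δ⌋ = m, e (f n)‖ ≤ 2 * δ / lam + 2 + 1 / δ := by
    intro m _
    rw [← Finset.sum_filter_add_sum_filter_not _ (fun n => f (n + 1) - f n < m + δ)]
    refine (norm_add_le _ _).trans ?_
    have hA : ‖∑ n ∈ (S.filter (fun n => ⌊f (n + 1) - f n + δ⌋ = m)).filter
        (fun n => f (n + 1) - f n < m + δ), e (f n)‖ ≤ 2 * δ / lam + 1 := by
      set T := (S.filter (fun n => ⌊f (n + 1) - f n + δ⌋ = m)).filter
        (fun n => f (n + 1) - f n < m + δ) with hT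
      have hcard : ‖∑ n ∈ T, e (f n)‖ ≤ T.card := by
        refine (norm_sum_le _ _).trans ?_
        simp [norm_e]
      refine hcard.trans ?_
      rcases T.eq_empty_or_nonempty with hTe | hne
      · rw [hTe]; simp; positivity
      have ha := T.min'_mem hne
      have hb := T.max'_mem hne
      have hab : T.min' hne ≤ T.max' hne := T.min'_le _ hb
      have hsub : T ⊆ Finset.Icc (T.min' hne) (T.max' hne) := fun n hn =>
        Finset.mem_Icc.2 ⟨T.min'_le n hn, T.le_max' n hn⟩
      have hc := Finset.card_le_card hsub
      rw [Nat.card_Icc] at hc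
      generalize T.min' hne = a at *
      generalize T.max' hne = b at *
      rw [hT, Finset.mem_filter, Finset.mem_filter, Int.floor_eq_iff] at ha hb
      have hg := hgrow a ha.1.1 b hb.1.1 hab
      have hc' : (T.card : ℝ) ≤ (b : ℝ) - a + 1 := by
        have h5 : T.card + a ≤ b + 1 := by omega
        have h6 : (T.card : ℝ) + a ≤ b + 1 := by exact_mod_cast h5
        linarith
      have h7 : (b : ℝ) - a ≤ 2 * δ / lam := by
        rw [le_div_iff₀ hlam]
        linarith [ha.1.2.1, hb.2]
      linarith
    have hB : ‖∑ n ∈ (S.filter (fun n => ⌊f (n + 1) - f n + δ⌋ = m)).filter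
        (fun n => ¬ f (n + 1) - f n < m + δ), e (f n)‖ ≤ 1 + 1 / δ := by
      have hmem : ∀ n, n ∈ (S.filter (fun n => ⌊f (n + 1) - f n + δ⌋ = m)).filter
          (fun n => ¬ f (n + 1) - f n < m + δ) ↔
          n ∈ S ∧ m + δ ≤ f (n + 1) - f n ∧ f (n + 1) - f n < m + 1 - δ := by
        intro n
        rw [Finset.mem_filter, Finset.mem_filter, Int.floor_eq_iff, not_lt]
        constructor
        · rintro ⟨⟨h, _, h4⟩, h3⟩
          exact ⟨h, h3, by linarith⟩
        · rintro ⟨h, h3, h4⟩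
          exact ⟨⟨h, by linarith, by linarith⟩, h3⟩
      apply norm_sum_le_of_diff_mem_int f _ _ hδ m
      · intro n hn
        exact ((hmem n).1 hn).2.1
      · intro n hn
        exact ((hmem n).1 hn).2.2.le
      · intro n hn hn'
        exact hm n ((hmem n).1 hn).1 (n + 1) ((hmem _).1 hn').1 (by omega)
      · intro a ha b hb n han hnb
        rw [hmem] at ha hb ⊢
        have hn := hS a ha.1 b hb.1 n han hnb
        exact ⟨hn, ha.2.1.trans (hm a ha.1 n hn han), (hm n hn b hb.1 hnb).trans_lt hb.2.2⟩
    linarith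
  refine (norm_sum_le_of_le _ hfib).trans ?_
  rw [Finset.sum_const, nsmul_eq_mul, Int.card_Icc]
  apply mul_le_mul_of_nonneg_right _ (by positivity)
  have h8 : 0 ≤ ⌊V + 1⌋ := Int.floor_nonneg.2 (by linarith)
  have h9 : (((⌊V + 1⌋ + 1 - 0).toNat : ℕ) : ℝ) = (⌊V + 1⌋ : ℝ) + 1 := by
    have : (((⌊V + 1⌋ + 1 - 0).toNat : ℕ) : ℤ) = ⌊V + 1⌋ + 1 := by omega
    exact_mod_cast this
  rw [h9]
  linarith [Int.floor_le (V + 1)]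

/-! ### Differences of `x ^ c` -/

lemma rpow_mean_value (p : ℝ) {x y : ℝ} (hx : 0 < x) (hxy : x < y) :
    ∃ z, x < z ∧ z < y ∧ y ^ p - x ^ p = p * z ^ (p - 1) * (y - x) := by
  have hder : ∀ z, 0 < z → HasDerivAt (fun t : ℝ => t ^ p) (p * z ^ (p - 1)) z :=
    fun z hz => Real.hasDerivAt_rpow_const (Or.inl hz.ne')
  obtain ⟨z, hz, hz'⟩ := exists_hasDerivAt_eq_slope (fun t : ℝ => t ^ p)
    (fun z => p * z ^ (p - 1)) hxy
    (fun t ht => (hder t (hx.trans_le ht.1)).continuousAt.continuousWithinAt)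
    (fun t ht => hder t (hx.trans ht.1))
  refine ⟨z, hz.1, hz.2, ?_⟩
  rw [hz']
  field_simp [sub_ne_zero.2 hxy.ne']

lemma rpow_diff_bounds {c X x : ℝ} (hc1 : 1 < c) (hx : 0 < x) (hx1 : 1 ≤ X) (hxX : x ≤ X) :
    0 ≤ (x + 1) ^ c - x ^ c ∧ (x + 1) ^ c - x ^ c ≤ c * (2 * X) ^ (c - 1) := by
  obtain ⟨z, hz1, hz2, hz⟩ := rpow_mean_value c hx (lt_add_one x)
  have hz0 : 0 < z := hx.trans hz1
  rw [hz, add_sub_cancel_left, mul_one]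
  refine ⟨by positivity, ?_⟩
  have := Real.rpow_le_rpow hz0.le (show z ≤ 2 * X by linarith) (show 0 ≤ c - 1 by linarith)
  exact mul_le_mul_of_nonneg_left this (by linarith)

/-- The differences of `x ^ c` grow with slope at least `c (c - 1) (2 X) ^ (c - 2)`, a lower bound
for the second derivative of `x ^ c` on `(0, 2 X]`. -/
lemma rpow_diff_grow {c X x y : ℝ} (hc1 : 1 < c) (hc2 : c < 2) (hx1 : 1 ≤ X) (hx : 0 < x)
    (hxy : x ≤ y) (hy : y ≤ X) :
    c * (c - 1) * (2 * X) ^ (c - 2) * (y - x) ≤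
      ((y + 1) ^ c - y ^ c) - ((x + 1) ^ c - x ^ c) := by
  rcases hxy.eq_or_lt with rfl | hlt
  · simp
  have hder : ∀ z, 0 < z → HasDerivAt (fun t : ℝ => (t + 1) ^ c - t ^ c)
      (c * (z + 1) ^ (c - 1) - c * z ^ (c - 1)) z := by
    intro z hz
    have h1 : HasDerivAt (fun t : ℝ => t ^ c) (c * z ^ (c - 1)) z :=
      Real.hasDerivAt_rpow_const (Or.inl hz.ne')
    have h2 : HasDerivAt (fun t : ℝ => t ^ c) (c * (z + 1) ^ (c - 1)) (z + 1) :=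
      Real.hasDerivAt_rpow_const (Or.inl (by linarith))
    exact (h2.comp_add_const z 1).sub h1
  obtain ⟨z, hz, hz'⟩ := exists_hasDerivAt_eq_slope (fun t : ℝ => (t + 1) ^ c - t ^ c)
    (fun z => c * (z + 1) ^ (c - 1) - c * z ^ (c - 1)) hlt
    (fun t ht => (hder t (hx.trans_le ht.1)).continuousAt.continuousWithinAt)
    (fun t ht => hder t (hx.trans ht.1))
  have hz0 : 0 < z := hx.trans hz.1
  rw [eq_div_iff (sub_ne_zero.2 hlt.ne')] at hz'
  rw [← hz']
  apply mul_le_mul_of_nonneg_right _ (by linarith)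
  obtain ⟨w, hw1, hw2, hw⟩ := rpow_mean_value (c - 1) hz0 (lt_add_one z)
  rw [← mul_sub, hw, add_sub_cancel_left, mul_one, mul_assoc, show c - 1 - 1 = c - 2 by ring]
  have := Real.rpow_le_rpow_of_nonpos (hz0.trans hw1) (show w ≤ 2 * X by linarith [hz.2])
    (show c - 2 ≤ 0 by linarith)
  exact mul_le_mul_of_nonneg_left (mul_le_mul_of_nonneg_left this (by linarith)) (by linarith)

/-! ### The exponential sum over `k n ^ c` -/

theorem stmt_13 (c μ : ℝ) (hc1 : 1 < c) (hc2 : c < 2) (hμ1 : 0 < μ) (hμ2 : μ < 1) :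
    ∃ C : ℝ, 0 < C ∧
      ∀ X : ℝ, 1 ≤ X → ∀ k : ℕ, 1 ≤ k →
        ‖∑ n ∈ (Finset.range (⌊X⌋₊ + 1)).filter (fun n : ℕ => μ * X < (n : ℝ)),
            e ((k : ℝ) * (n : ℝ) ^ c)‖ ≤
          C * ((k : ℝ) ^ ((1 : ℝ) / 2) * X ^ (c / 2) +
            (k : ℝ) ^ (-(1 : ℝ) / 2) * X ^ (1 - c / 2)) := by
  -- The slope is `κ * Λ` and the differences are at most `v * (Λ * X)`, where `Λ = k X ^ (c - 2)`.
  set κ : ℝ := c * (c - 1) * 2 ^ (c - 2) with hκ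
  set v : ℝ := c * 2 ^ (c - 1) with hv
  have hκ0 : 0 < κ := mul_pos (mul_pos (by linarith) (by linarith)) (by positivity)
  have hv0 : 0 < v := mul_pos (by linarith) (by positivity)
  have hCpos : 0 < (v + 2) * (2 / κ + 2) := by positivity
  refine ⟨2 + (v + 2) * (2 / κ + 2), by positivity, ?_⟩
  intro X hX k hk
  have hX0 : 0 < X := by linarith
  have hk0 : (0 : ℝ) < k := by exact_mod_cast hk
  set s : ℝ := (k : ℝ) ^ ((1 : ℝ) / 2) * X ^ (c / 2 - 1) with hs
  have hs0 : 0 < s := by positivity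
  have hs2 : s ^ 2 = k * X ^ (c - 2) := by
    rw [hs, mul_pow, ← Real.rpow_natCast, ← Real.rpow_natCast, ← Real.rpow_mul hk0.le,
      ← Real.rpow_mul hX0.le]
    norm_num
    left; ring_nf
  have hT1 : (k : ℝ) ^ ((1 : ℝ) / 2) * X ^ (c / 2) = X * s := by
    have : X ^ (c / 2) = X * X ^ (c / 2 - 1) := by
      rw [Real.rpow_sub_one hX0.ne']; field_simp
    rw [this, hs]; ring
  have hT2 : (k : ℝ) ^ (-(1 : ℝ) / 2) * X ^ (1 - c / 2) = 1 / s := by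
    rw [hs, show -(1 : ℝ) / 2 = -(1 / 2) by ring, show 1 - c / 2 = -(c / 2 - 1) by ring,
      Real.rpow_neg hk0.le, Real.rpow_neg hX0.le]
    field_simp
  rw [hT1, hT2]
  set S := (Finset.range (⌊X⌋₊ + 1)).filter (fun n : ℕ => μ * X < (n : ℝ)) with hSdef
  have hmem : ∀ n, n ∈ S ↔ (n : ℝ) ≤ X ∧ μ * X < n := by
    intro n
    rw [hSdef, Finset.mem_filter, Finset.mem_range, Nat.lt_succ_iff, Nat.le_floor_iff hX0.le]
  have hpos : ∀ n ∈ S, (0 : ℝ) < n := fun n hn =>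
    (mul_pos hμ1 hX0).trans ((hmem n).1 hn).2
  have h1s : 0 < 1 / s := by positivity
  rcases le_or_gt s (1 / 2) with hsmall | hbig
  · have hV0 : 0 ≤ v * (s ^ 2 * X) := by positivity
    have hmain := second_difference_test (fun n => (k : ℝ) * (n : ℝ) ^ c) S
      (fun a ha b hb n han hnb => by
        rw [hmem] at ha hb ⊢
        have h1 : (a : ℝ) ≤ n := by exact_mod_cast han
        have h2 : (n : ℝ) ≤ b := by exact_mod_cast hnb
        exact ⟨by linarith [hb.1], by linarith [ha.2]⟩)
      (δ := s) (lam := κ * s ^ 2) (V := v * (s ^ 2 * X)) hs0 hsmall (by positivity) hV0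
      (fun n hn => by
        have := (rpow_diff_bounds hc1 (hpos n hn) hX ((hmem n).1 hn).1).1
        push_cast
        rw [← mul_sub]; positivity)
      (fun n hn => by
        have := (rpow_diff_bounds hc1 (hpos n hn) hX ((hmem n).1 hn).1).2
        push_cast
        rw [← mul_sub]
        refine (mul_le_mul_of_nonneg_left this hk0.le).trans (le_of_eq ?_)
        have h3 : X ^ (c - 1) = X ^ (c - 2) * X := by
          rw [← Real.rpow_add_one hX0.ne']; congr 1; ring
        rw [hs2, hv, Real.mul_rpow zero_le_two hX0.le, h3]; ring)
      (fun a ha b hb hab => by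
        have := rpow_diff_grow hc1 hc2 hX (hpos a ha) (Nat.cast_le.2 hab) ((hmem b).1 hb).1
        have h4 := mul_le_mul_of_nonneg_left this hk0.le
        rw [Real.mul_rpow zero_le_two hX0.le] at h4
        push_cast
        rw [hs2, hκ]
        linarith)
    refine hmain.trans ?_
    have h5 : 2 * s / (κ * s ^ 2) + 2 + 1 / s ≤ (2 / κ + 2) * (1 / s) := by
      have h6 : 2 * s / (κ * s ^ 2) = 2 / κ * (1 / s) := by field_simp
      -- `2 ≤ 1 / s` absorbs the additive constant.
      have h7 : 2 ≤ 1 / s := by rw [le_div_iff₀ hs0]; linarith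
      rw [h6]; linarith
    calc (v * (s ^ 2 * X) + 2) * (2 * s / (κ * s ^ 2) + 2 + 1 / s)
        ≤ (v * (s ^ 2 * X) + 2) * ((2 / κ + 2) * (1 / s)) :=
          mul_le_mul_of_nonneg_left h5 (by positivity)
      _ = (2 / κ + 2) * (v * (X * s) + 2 * (1 / s)) := by field_simp
      _ ≤ (2 / κ + 2) * ((v + 2) * (X * s + 1 / s)) := by
          apply mul_le_mul_of_nonneg_left _ (by positivity)
          have : 0 < X * s := by positivity
          nlinarith [mul_pos hv0 h1s]
      _ ≤ _ := by
          have : 0 < X * s + 1 / s := by positivity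
          nlinarith
  · have hcard : ‖∑ n ∈ S, e ((k : ℝ) * (n : ℝ) ^ c)‖ ≤ S.card := by
      refine (norm_sum_le _ _).trans ?_
      simp [norm_e]
    have hsub : S ⊆ Finset.Icc 1 ⌊X⌋₊ := by
      intro n hn
      rw [Finset.mem_Icc]
      exact ⟨by have := hpos n hn; exact_mod_cast this, Nat.le_floor ((hmem n).1 hn).1⟩
    have hc := Finset.card_le_card hsub
    rw [Nat.card_Icc, Nat.add_sub_cancel] at hc
    have hc' : (S.card : ℝ) ≤ X := (Nat.cast_le.2 hc).trans (Nat.floor_le hX0.le)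
    have h8 : X ≤ 2 * (X * s) := by nlinarith
    have h9 : 0 < X * s + 1 / s := by positivity
    nlinarith [mul_pos hCpos h9]
end

section
/- Let $c$ and $\mu$ be fixed real numbers with $c > 1$ and $0 < \mu < 1$. There exists a constant $C = C(c, \mu) > 0$ such that for every real $X \geq 1$ and every real $\alpha \neq 0$, one has $|I(\alpha)| \leq C |\alpha|^{-1} X^{1 - c}$. -/
/-- `I(α) = ∫_{μX}^{X} e(α t^c) dt`. -/
noncomputable def I (c μ X : ℝ) (α : ℝ) : ℂ := ∫ t in (μ * X)..X, e (α * t ^ c)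

lemma continuous_e : Continuous e := by
  unfold e; fun_prop

lemma hasDerivAt_e_rpow (c α : ℝ) {t : ℝ} (ht : 0 < t) :
    HasDerivAt (fun t : ℝ => e (α * t ^ c))
      (e (α * t ^ c) * (2 * Real.pi * Complex.I * ((α * (c * t ^ (c - 1)) : ℝ) : ℂ))) t := by
  have h1 : HasDerivAt (fun t : ℝ => α * t ^ c) (α * (c * t ^ (c - 1))) t :=
    (Real.hasDerivAt_rpow_const (Or.inl ht.ne')).const_mul α
  exact (h1.ofReal_comp.const_mul (2 * Real.pi * Complex.I : ℂ)).cexp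

/-- Integration by parts of `t^(1-c)` against the derivative of `e(α t^c)`. The factor `2πiαc` is
kept on the left, so that `α = 0` and `c = 0` need no exclusion. -/
lemma integral_eq_by_parts (c α : ℝ) {a b : ℝ} (ha : 0 < a) (hab : a ≤ b) :
    (2 * Real.pi * Complex.I * α * c) * ∫ t in a..b, e (α * t ^ c) =
      ((b ^ (1 - c) : ℝ) : ℂ) * e (α * b ^ c) - ((a ^ (1 - c) : ℝ) : ℂ) * e (α * a ^ c)
        - ∫ t in a..b, (((1 - c) * t ^ (-c) : ℝ) : ℂ) * e (α * t ^ c) := by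
  have hpos : ∀ t ∈ Set.uIcc a b, 0 < t := fun t ht => by
    rw [Set.uIcc_of_le hab] at ht; exact ha.trans_le ht.1
  have hcont : ∀ p : ℝ, ContinuousOn (fun t : ℝ => t ^ p) (Set.uIcc a b) := fun p =>
    continuousOn_id.rpow_const fun t ht => Or.inl (hpos t ht).ne'
  have hv : ContinuousOn (fun t : ℝ => e (α * t ^ c)) (Set.uIcc a b) :=
    continuous_e.comp_continuousOn (continuousOn_const.mul (hcont c))
  have hu' : ContinuousOn (fun t : ℝ => (((1 - c) * t ^ (-c) : ℝ) : ℂ)) (Set.uIcc a b) :=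
    Complex.continuous_ofReal.comp_continuousOn (continuousOn_const.mul (hcont (-c)))
  have hw : ContinuousOn (fun t : ℝ => ((α * (c * t ^ (c - 1)) : ℝ) : ℂ)) (Set.uIcc a b) :=
    Complex.continuous_ofReal.comp_continuousOn
      (continuousOn_const.mul (continuousOn_const.mul (hcont (c - 1))))
  rw [← intervalIntegral.integral_mul_deriv_eq_deriv_mul
    (u := fun t : ℝ => ((t ^ (1 - c) : ℝ) : ℂ)) (v := fun t : ℝ => e (α * t ^ c))
    (v' := fun t => e (α * t ^ c) * (2 * Real.pi * Complex.I * ((α * (c * t ^ (c - 1)) : ℝ) : ℂ)))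
    ?_ (fun t ht => hasDerivAt_e_rpow c α (hpos t ht)) hu'.intervalIntegrable
    (hv.mul (continuousOn_const.mul hw)).intervalIntegrable,
    ← intervalIntegral.integral_const_mul]
  · refine intervalIntegral.integral_congr fun t ht => ?_
    have h1 : (1 : ℂ) = ((t ^ (1 - c) : ℝ) : ℂ) * ((t ^ (c - 1) : ℝ) : ℂ) := by
      rw [← Complex.ofReal_mul, ← Real.rpow_add (hpos t ht)]
      simp
    push_cast
    linear_combination (2 * Real.pi * Complex.I * α * c * e (α * t ^ c)) * h1
  · intro t ht
    have h := Real.hasDerivAt_rpow_const (p := 1 - c) (Or.inl (hpos t ht).ne')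
    rw [show 1 - c - 1 = -c by ring] at h
    exact h.ofReal_comp

theorem stmt_14 (c μ : ℝ) (hc : 1 < c) (hμ1 : 0 < μ) (hμ2 : μ < 1) :
    ∃ C : ℝ, 0 < C ∧
      ∀ X : ℝ, 1 ≤ X → ∀ α : ℝ, α ≠ 0 →
        ‖I c μ X α‖ ≤ C * |α|⁻¹ * X ^ (1 - c) := by
  have hc0 : 0 < c := by linarith
  have hc1 : 0 < c - 1 := by linarith
  have hm := Real.rpow_pos_of_pos hμ1
  -- The three summands bound the boundary terms at `X` and `μX` and the remaining integral.
  refine ⟨(1 + μ ^ (1 - c) + (c - 1) * μ ^ (-c)) / (2 * Real.pi * c), ?_, ?_⟩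
  · have := hm (1 - c)
    have := hm (-c)
    positivity
  intro X hX α hα
  have hX0 : 0 < X := by linarith
  have ha : 0 < μ * X := by positivity
  have hab : μ * X ≤ X := by nlinarith
  have hα' : 0 < |α| := abs_pos.mpr hα
  have hint : ‖∫ t in (μ * X)..X, (((1 - c) * t ^ (-c) : ℝ) : ℂ) * e (α * t ^ c)‖
      ≤ (c - 1) * μ ^ (-c) * X ^ (1 - c) := by
    have h1 : ∀ t ∈ Set.uIoc (μ * X) X,
        ‖(((1 - c) * t ^ (-c) : ℝ) : ℂ) * e (α * t ^ c)‖ ≤ (c - 1) * (μ * X) ^ (-c) := by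
      intro t ht
      rw [Set.uIoc_of_le hab] at ht
      have ht0 : 0 < t := ha.trans ht.1
      rw [norm_mul, norm_e, mul_one, Complex.norm_real, Real.norm_eq_abs, abs_mul,
        abs_of_neg (by linarith : 1 - c < 0), abs_of_pos (Real.rpow_pos_of_pos ht0 _), neg_sub]
      exact mul_le_mul_of_nonneg_left
        (Real.rpow_le_rpow_of_nonpos ha ht.1.le (by linarith)) hc1.le
    refine (intervalIntegral.norm_integral_le_of_norm_le_const h1).trans ?_
    have h2 : |X - μ * X| ≤ X := by
      rw [abs_of_nonneg (by linarith)]; linarith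
    have h3 : X ^ (1 - c) = X ^ (-c) * X := by
      rw [show 1 - c = -c + 1 by ring, Real.rpow_add_one hX0.ne']
    rw [Real.mul_rpow hμ1.le hX0.le, h3]
    have := hm (-c)
    have := Real.rpow_pos_of_pos hX0 (-c)
    calc (c - 1) * (μ ^ (-c) * X ^ (-c)) * |X - μ * X|
        ≤ (c - 1) * (μ ^ (-c) * X ^ (-c)) * X := by gcongr
      _ = _ := by ring
  have hbd : ∀ b : ℝ, 0 < b → ‖((b ^ (1 - c) : ℝ) : ℂ) * e (α * b ^ c)‖ = b ^ (1 - c) := by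
    intro b hb
    rw [norm_mul, norm_e, mul_one, Complex.norm_real, Real.norm_eq_abs,
      abs_of_pos (Real.rpow_pos_of_pos hb _)]
  have key := congrArg norm (integral_eq_by_parts c α ha hab)
  have hκ : ‖(2 * Real.pi * Complex.I * α * c : ℂ)‖ = 2 * Real.pi * c * |α| := by
    simp [abs_of_pos Real.pi_pos, abs_of_pos hc0]; ring
  rw [norm_mul, hκ] at key
  have htri := (norm_sub_le (((X ^ (1 - c) : ℝ) : ℂ) * e (α * X ^ c)
      - (((μ * X) ^ (1 - c) : ℝ) : ℂ) * e (α * (μ * X) ^ c))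
      (∫ t in (μ * X)..X, (((1 - c) * t ^ (-c) : ℝ) : ℂ) * e (α * t ^ c))).trans
    (add_le_add (norm_sub_le _ _) hint)
  rw [← key, hbd X hX0, hbd _ ha, Real.mul_rpow hμ1.le hX0.le] at htri
  have hk : 0 < 2 * Real.pi * c * |α| := by positivity
  have hfin : (1 + μ ^ (1 - c) + (c - 1) * μ ^ (-c)) / (2 * Real.pi * c) * |α|⁻¹ * X ^ (1 - c)
      = (X ^ (1 - c) + μ ^ (1 - c) * X ^ (1 - c) + (c - 1) * μ ^ (-c) * X ^ (1 - c))
        / (2 * Real.pi * c * |α|) := by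
    field_simp
  rw [hfin, le_div_iff₀ hk, mul_comm]
  exact htri
end
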